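/- Let y, ŷ ∈ (ℝᵐ)^T, let x̂ be a minimizer of x ↦ p(x; ŷ) and x* a minimizer of x ↦ p(x; y) over (ℝⁿ)^T. Then the suboptimality of the open-loop plan computed from the predictions ŷ satisfies p(x̂; y) − p(x*; y) ≤ Σ_{t=1}^T (1/2)‖P(ŷ_t − y_t)‖₂². -/

import Mathlib

open Finset

noncomputable def norm2sq {m : ℕ} (v : Fin m → ℝ) : ℝ := ∑ i, (v i) ^ 2
noncomputable def norm1 {n : ℕ} (v : Fin n → ℝ) : ℝ := ∑ i, |v i|

noncomputable def pinv {m n : ℕ} (K : Matrix (Fin m) (Fin n) ℝ) :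
    Matrix (Fin n) (Fin m) ℝ := (K.transpose * K)⁻¹ * K.transpose

noncomputable def proj {m n : ℕ} (K : Matrix (Fin m) (Fin n) ℝ) :
    Matrix (Fin m) (Fin m) ℝ := K * pinv K

noncomputable def trackCost {m n : ℕ} (β : ℝ) (K : Matrix (Fin m) (Fin n) ℝ)
    (T : ℕ) (y : ℕ → Fin m → ℝ) (x : ℕ → Fin n → ℝ) : ℝ :=
  ∑ t ∈ Finset.Icc 1 T,
    ((1 / 2) * norm2sq (y t - K.mulVec (x t)) + β * norm1 (x t - x (t - 1)))

/-!
Stacking the horizon into one Euclidean space turns the tracking cost into a penalized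
least-squares objective `½‖y - A x‖² + f x` with `f` convex. For a minimizer `x̂` with target `ŷ`
and a competitor `x`, put `d = A (x - x̂)`. First-order optimality reads
`⟪ŷ - A x̂, d⟫ ≤ f x - f x̂`; substituting it into the expansion of the objective with target `y`
bounds the regret by `⟪y - ŷ, d⟫ - ½‖d‖²`. As `d` lies in the range of `A`, only the projection
`p` of `ŷ - y` onto that range enters, and `-⟪p, d⟫ - ½‖d‖² ≤ ½‖p‖²`.
-/

section ConvexSum

variable {E ι : Type*} [AddCommMonoid E] [SMul ℝ E]

theorem convexOn_finset_sum {C : Set E} (hC : Convex ℝ C) {s : Finset ι} {f : ι → E → ℝ}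
    (hf : ∀ i ∈ s, ConvexOn ℝ C (f i)) : ConvexOn ℝ C (fun x => ∑ i ∈ s, f i x) := by
  simpa only [Finset.sum_fn] using
    Finset.sum_induction f (ConvexOn ℝ C) (fun _ _ => ConvexOn.add) (convexOn_const 0 hC) hf

end ConvexSum

section PenalizedLeastSquares

open Filter Topology
open scoped RealInnerProductSpace

variable {E H : Type*} [AddCommGroup E] [Module ℝ E] [NormedAddCommGroup H]
  [InnerProductSpace ℝ H]

/-- The penalized least-squares objective `½‖y - A x‖² + f x` of the decision `x`, with design
map `A`, penalty `f` and target `y`. -/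
noncomputable def penalizedLeastSquares (A : E →ₗ[ℝ] H) (f : E → ℝ) (y : H) (x : E) : ℝ :=
  1 / 2 * ‖y - A x‖ ^ 2 + f x

theorem penalizedLeastSquares_sub (A : E →ₗ[ℝ] H) (f : E → ℝ) (y : H) (x x' : E) :
    penalizedLeastSquares A f y x - penalizedLeastSquares A f y x' =
      ⟪y - A x, A (x' - x)⟫ - 1 / 2 * ‖A (x' - x)‖ ^ 2 - (f x' - f x) := by
  have residual : y - A x' = (y - A x) - A (x' - x) := by
    rw [map_sub]
    abel
  rw [penalizedLeastSquares, penalizedLeastSquares, residual,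
    norm_sub_sq_real (y - A x)]
  ring

variable {A : E →ₗ[ℝ] H} {f : E → ℝ} {C : Set E} {y yhat p : H} {x xhat : E}

theorem inner_residual_le_of_isMinOn (hf : ConvexOn ℝ C f)
    (hmin : IsMinOn (penalizedLeastSquares A f y) C xhat) (hxhat : xhat ∈ C) (hx : x ∈ C) :
    ⟪y - A xhat, A (x - xhat)⟫ ≤ f x - f xhat := by
  set d := A (x - xhat)
  have perturbed : ∀ s ∈ Set.Ioc (0 : ℝ) 1,
      ⟪y - A xhat, d⟫ ≤ f x - f xhat + s * (1 / 2 * ‖d‖ ^ 2) := by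
    rintro s ⟨hs0, hs1⟩
    have hmem : xhat + s • (x - xhat) ∈ C := hf.1.add_smul_sub_mem hxhat hx ⟨hs0.le, hs1⟩
    have hconv : f (xhat + s • (x - xhat)) ≤ (1 - s) * f xhat + s * f x := by
      have hcomb : xhat + s • (x - xhat) = (1 - s) • xhat + s • x := by module
      rw [hcomb]
      exact hf.2 hxhat hx (sub_nonneg.2 hs1) hs0.le (sub_add_cancel 1 s)
    have hopt := penalizedLeastSquares_sub A f y xhat (xhat + s • (x - xhat))
    rw [add_sub_cancel_left, map_smul, inner_smul_right, norm_smul, mul_pow, Real.norm_eq_abs,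
      sq_abs] at hopt
    have hle := isMinOn_iff.1 hmin _ hmem
    refine le_of_mul_le_mul_left ?_ hs0
    linarith
  have limit : Tendsto (fun s : ℝ => f x - f xhat + s * (1 / 2 * ‖d‖ ^ 2)) (𝓝[>] 0)
      (𝓝 (f x - f xhat)) := by
    refine Tendsto.mono_left (Continuous.tendsto' (by fun_prop) _ _ ?_) nhdsWithin_le_nhds
    rw [zero_mul, add_zero]
  exact ge_of_tendsto limit (eventually_of_mem (Ioc_mem_nhdsGT one_pos) perturbed)

theorem penalizedLeastSquares_sub_le_of_isMinOn (hf : ConvexOn ℝ C f)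
    (hmin : IsMinOn (penalizedLeastSquares A f yhat) C xhat) (hxhat : xhat ∈ C) (hx : x ∈ C)
    (hp : yhat - y - p ∈ (LinearMap.range A)ᗮ) :
    penalizedLeastSquares A f y xhat - penalizedLeastSquares A f y x ≤ 1 / 2 * ‖p‖ ^ 2 := by
  set d := A (x - xhat) with hd
  have optimality : ⟪yhat - A xhat, d⟫ ≤ f x - f xhat :=
    inner_residual_le_of_isMinOn hf hmin hxhat hx
  have projection : ⟪yhat - y, d⟫ = ⟪p, d⟫ := by
    rw [← sub_eq_zero, ← inner_sub_left]
    exact Submodule.inner_left_of_mem_orthogonal (LinearMap.mem_range_self A _) hp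
  have split : ⟪y - A xhat, d⟫ = ⟪yhat - A xhat, d⟫ - ⟪yhat - y, d⟫ := by
    rw [← inner_sub_left, sub_sub_sub_cancel_left]
  have square : 0 ≤ ‖p‖ ^ 2 + 2 * ⟪p, d⟫ + ‖d‖ ^ 2 :=
    norm_add_sq_real p d ▸ sq_nonneg ‖p + d‖
  rw [penalizedLeastSquares_sub, ← hd]
  linarith

end PenalizedLeastSquares

section Stacking

open scoped RealInnerProductSpace

variable {ι : Type*} {m n : ℕ}

/-- The restriction of a vector sequence to the times in `s`, as a single Euclidean vector; this
is how trajectories over a horizon acquire their inner product. -/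
noncomputable def stack (s : Finset ι) (m : ℕ) :
    (ι → Fin m → ℝ) →ₗ[ℝ] EuclideanSpace ℝ (s × Fin m) where
  toFun y := WithLp.toLp 2 fun i => y i.1 i.2
  map_add' _ _ := rfl
  map_smul' _ _ := rfl

theorem inner_stack (s : Finset ι) (u v : ι → Fin m → ℝ) :
    ⟪stack s m u, stack s m v⟫ = ∑ t ∈ s, v t ⬝ᵥ u t := by
  simp only [PiLp.inner_apply, Fintype.sum_prod_type, Real.inner_apply]
  exact (Finset.sum_coe_sort s fun t => ∑ i, u t i * v t i).trans
    (Finset.sum_congr rfl fun t _ => dotProduct_comm _ _)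

theorem norm_stack_sq (s : Finset ι) (v : ι → Fin m → ℝ) :
    ‖stack s m v‖ ^ 2 = ∑ t ∈ s, norm2sq (v t) := by
  rw [← real_inner_self_eq_norm_sq, inner_stack]
  simp only [dotProduct, norm2sq, sq]

/-- The linear map sending an action sequence `x` to the stacked outputs `K x_t`, `t ∈ s`. -/
noncomputable def stackedOutput (K : Matrix (Fin m) (Fin n) ℝ) (s : Finset ι) :
    (ι → Fin n → ℝ) →ₗ[ℝ] EuclideanSpace ℝ (s × Fin m) :=
  stack s m ∘ₗ K.mulVecLin.compLeft ι

theorem transpose_mul_proj {K : Matrix (Fin m) (Fin n) ℝ} (hK : IsUnit (K.transpose * K).det) :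
    K.transpose * proj K = K.transpose := by
  rw [proj, pinv, ← Matrix.mul_assoc, Matrix.mul_nonsing_inv_cancel_left _ _ hK]

theorem stack_sub_stack_proj_mem_orthogonal {K : Matrix (Fin m) (Fin n) ℝ}
    (hK : IsUnit (K.transpose * K).det) (s : Finset ι) (e : ι → Fin m → ℝ) :
    stack s m e - stack s m (fun t => (proj K).mulVec (e t)) ∈
      (LinearMap.range (stackedOutput K s))ᗮ := by
  have normal_eq (w : Fin m → ℝ) : K.transpose.mulVec (w - (proj K).mulVec w) = 0 := by
    rw [Matrix.mulVec_sub, Matrix.mulVec_mulVec, transpose_mul_proj hK, sub_self]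
  rw [← map_sub, Submodule.mem_orthogonal']
  rintro _ ⟨x, rfl⟩
  refine (inner_stack s _ _).trans (Finset.sum_eq_zero fun t _ => ?_)
  change K.mulVec (x t) ⬝ᵥ (e t - (proj K).mulVec (e t)) = 0
  rw [← Matrix.vecMul_transpose, ← Matrix.dotProduct_mulVec, normal_eq, dotProduct_zero]

end Stacking

section TrackingCost

variable {m n : ℕ}

/-- The unweighted `ℓ¹` switching cost `Σ_{t=1}^T ‖x_t - x_{t-1}‖₁`. -/
noncomputable def switchingCost (T : ℕ) (x : ℕ → Fin n → ℝ) : ℝ :=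
  ∑ t ∈ Finset.Icc 1 T, norm1 (x t - x (t - 1))

theorem convexOn_norm1 : ConvexOn ℝ Set.univ (norm1 : (Fin n → ℝ) → ℝ) :=
  convexOn_finset_sum convex_univ fun i _ =>
    convexOn_univ_norm.comp_linearMap (LinearMap.proj i : (Fin n → ℝ) →ₗ[ℝ] ℝ)

theorem convexOn_switchingCost (T : ℕ) :
    ConvexOn ℝ Set.univ (switchingCost T : (ℕ → Fin n → ℝ) → ℝ) := by
  let action (s : ℕ) : (ℕ → Fin n → ℝ) →ₗ[ℝ] Fin n → ℝ := LinearMap.proj s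
  refine convexOn_finset_sum convex_univ fun t _ => ?_
  exact convexOn_norm1.comp_linearMap (action t - action (t - 1))

theorem trackCost_eq_penalizedLeastSquares (β : ℝ) (K : Matrix (Fin m) (Fin n) ℝ) (T : ℕ)
    (y : ℕ → Fin m → ℝ) :
    trackCost β K T y = penalizedLeastSquares (stackedOutput K (Finset.Icc 1 T))
      (β • switchingCost T) (stack (Finset.Icc 1 T) m y) := by
  funext x
  have residual : stack (Finset.Icc 1 T) m y - stackedOutput K (Finset.Icc 1 T) x =
      stack (Finset.Icc 1 T) m fun t => y t - K.mulVec (x t) := rfl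
  rw [trackCost, penalizedLeastSquares, residual, norm_stack_sq, Finset.sum_add_distrib,
    ← Finset.mul_sum, ← Finset.mul_sum, Pi.smul_apply, smul_eq_mul, switchingCost]

theorem open_loop_suboptimality_general {T : ℕ} {K : Matrix (Fin m) (Fin n) ℝ}
    (hK : IsUnit (K.transpose * K).det) {β : ℝ} (hβ : 0 ≤ β) (y : ℕ → Fin m → ℝ)
    {yhat : ℕ → Fin m → ℝ} {C : Set (ℕ → Fin n → ℝ)} (hC : Convex ℝ C)
    {xhat x : ℕ → Fin n → ℝ} (hxhat : xhat ∈ C) (hx : x ∈ C)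
    (hmin : IsMinOn (trackCost β K T yhat) C xhat) :
    trackCost β K T y xhat - trackCost β K T y x
      ≤ ∑ t ∈ Finset.Icc 1 T, (1 / 2) * norm2sq ((proj K).mulVec (yhat t - y t)) := by
  have convex_penalty : ConvexOn ℝ C (β • switchingCost T) :=
    ((convexOn_switchingCost T).smul hβ).subset (Set.subset_univ C) hC
  have orthogonal := stack_sub_stack_proj_mem_orthogonal hK (Finset.Icc 1 T) (yhat - y)
  rw [map_sub] at orthogonal
  rw [trackCost_eq_penalizedLeastSquares] at hmin
  rw [trackCost_eq_penalizedLeastSquares, ← Finset.mul_sum]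
  simpa only [norm_stack_sq, Pi.sub_apply] using
    penalizedLeastSquares_sub_le_of_isMinOn convex_penalty hmin hxhat hx orthogonal

end TrackingCost

/-- The suboptimality of the open-loop plan computed from predictions `ŷ` is at most
`Σ_t ½‖P(ŷ_t − y_t)‖²`. -/
theorem open_loop_suboptimality
    (m n T : ℕ) (hm : 1 ≤ m) (hn : 1 ≤ n) (hT : 1 ≤ T)
    (K : Matrix (Fin m) (Fin n) ℝ) (hK : IsUnit (K.transpose * K).det)
    (β : ℝ) (hβ : 0 < β)
    (y yhat : ℕ → Fin m → ℝ)
    (xhat xstar : ℕ → Fin n → ℝ)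
    (hxhat0 : xhat 0 = 0) (hxstar0 : xstar 0 = 0)
    (hxhat : ∀ x : ℕ → Fin n → ℝ, x 0 = 0 →
      trackCost β K T yhat xhat ≤ trackCost β K T yhat x)
    (hxstar : ∀ x : ℕ → Fin n → ℝ, x 0 = 0 →
      trackCost β K T y xstar ≤ trackCost β K T y x) :
    trackCost β K T y xhat - trackCost β K T y xstar
      ≤ ∑ t ∈ Finset.Icc 1 T, (1 / 2) * norm2sq ((proj K).mulVec (yhat t - y t)) :=
  open_loop_suboptimality_general hK hβ.le y
    ((convex_singleton 0).linear_preimage (LinearMap.proj 0)) hxhat0 hxstar0 (isMinOn_iff.2 hxhat)
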